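/- arXiv:1910.07299 — 2 statements merged into one kernel-verified Lean document; each statement's English description precedes it below -/
import Mathlib

section
/- Let M and M' be acyclic modules over a finite alphabet Λ, with node sets S, S' and input sets I, I', let T ⊆ S and T' ⊆ S' with |T| = |T'|, and suppose there are bijections g : I → I' and h : T → T' such that for every s ∈ T the output functions O_s of M and O'_{h(s)} of M' have the same delay and satisfy O_s(J) = O'_{h(s)}(J ∘ g^{-1}) for every input sequence J over I whose length is that delay. Then for every total function ω : I → T, there exists a bijection ĥ from the set of configurations lying on periodic orbits of F = ↻_ω M to the set of configurations lying on periodic orbits of F' = ↻_{h∘ω∘g^{-1}} M' such that ĥ(F(x)) = F'(ĥ(x)) for all such x; in particular F and F' have the same number of attractors of each size. -/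
/-- A module over alphabet `Λ` with node set `S` and input set `I`:
a family of local functions `f s : Λ^S → Λ^I → Λ`. -/
structure AModule (Λ S I : Type) where
  f : S → (S → Λ) → (I → Λ) → Λ

namespace AModule

variable {Λ S I : Type}

/-- One-step update `M(x,i)`. -/
def upd (M : AModule Λ S I) (x : S → Λ) (i : I → Λ) : S → Λ :=
  fun s => M.f s x i

/-- Iterated update `M(x,(i_1,…,i_m))`, defined by
`M(x,∅) = x` and `M(x,(i_1,…,i_m)) = M(M(x,i_1),(i_2,…,i_m))`. -/
def seqUpd (M : AModule Λ S I) (x : S → Λ) {m : ℕ} (J : Fin m → I → Λ) : S → Λ :=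
  (List.ofFn J).foldl M.upd x

/-- Node `s` influences node `s'`: two configurations over `S ∪ I` differing
exactly at `s` (so with the same input part) on which `f_{s'}` differs. -/
def Influences (M : AModule Λ S I) (s s' : S) : Prop :=
  ∃ (x x' : S → Λ) (i : I → Λ),
    (∀ r, r ≠ s → x r = x' r) ∧ x s ≠ x' s ∧ M.f s' x i ≠ M.f s' x' i

/-- `M` is acyclic: its interaction digraph has no directed cycle. -/
def Acyclic (M : AModule Λ S I) : Prop :=
  ∀ s, ¬ Relation.TransGen M.Influences s s

/-- `O` is an output function of delay `m` for node `s`. -/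
def IsOutputFn (M : AModule Λ S I) (s : S) {m : ℕ}
    (O : (Fin m → I → Λ) → Λ) : Prop :=
  ∀ (x : S → Λ) (J : Fin m → I → Λ), M.seqUpd x J s = O J

/-- The set of delays `m ≥ 1` for which `s` admits an output function. -/
def delaySet (M : AModule Λ S I) (s : S) : Set ℕ :=
  {m | 1 ≤ m ∧ ∃ O : (Fin m → I → Λ) → Λ, M.IsOutputFn s O}

/-- The complete recursive wiring `↻_ω M` as a map on configurations:
`F(x)_s = f_s(x, (x_{ω(α)})_{α ∈ I})`. -/
def wireF (M : AModule Λ S I) (ω : I → S) : (S → Λ) → (S → Λ) :=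
  fun x => M.upd x (fun α => x (ω α))

/-- The input sequence of length `k` generated by `x`:
`Ĵ(x)^k_ℓ = F^{ℓ-1}(x)|_{ω(I)}`. -/
def genSeq (M : AModule Λ S I) (ω : I → S) (x : S → Λ) (k : ℕ) :
    Fin k → I → Λ :=
  fun ℓ α => (M.wireF ω)^[ℓ.val] x (ω α)

end AModule

/-- An attractor of size `c` of the parallel map `F`: the (finite) periodic
orbit of a configuration whose minimal period is `c`. -/
def IsAttractor {Λ S : Type} (F : (S → Λ) → (S → Λ)) (c : ℕ)
    (X : Set (S → Λ)) : Prop :=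
  ∃ x : S → Λ, Function.minimalPeriod F x = c ∧ X = {y | ∃ j : ℕ, y = F^[j] x}

/-!
Feed an acyclic module with a periodic stream of inputs. After finitely many steps its state no
longer depends on the initial configuration, so the map that runs the module for one period has
a constant iterate, hence exactly one fixed point. Thus a periodic configuration of a complete
recursive wiring is determined by its trace, the stream of the values that it feeds to the inputs.
A periodic stream is the trace of a periodic configuration exactly when the outputs it produces
reproduce it, and this depends on the output functions alone. Two wirings with the same output
functions thus have the same traces of periodic configurations, and both maps act on these traces
as the shift.
-/

open Function Set Filter

theorem existsUnique_isFixedPt_of_iterate_eq {X : Type*} [Nonempty X] {G : X → X} {n : ℕ}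
    (hG : ∀ x y, G^[n] x = G^[n] y) : ∃! x, IsFixedPt G x := by
  obtain ⟨x₀⟩ := ‹Nonempty X›
  refine ⟨G^[n] x₀, ?_, fun y hy => ?_⟩
  · calc G (G^[n] x₀) = G^[n] (G x₀) := Commute.self_iterate G n x₀
      _ = G^[n] x₀ := hG _ _
  · rw [← hG y, (hy.iterate n).eq]

theorem dependsOn_of_update_eq {ι β : Type*} {α : ι → Type*} [Finite ι] [DecidableEq ι]
    {f : (∀ i, α i) → β} {A : Set ι} (hf : ∀ a ∉ A, ∀ x b, f (update x a b) = f x) :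
    DependsOn f A := by
  have := Fintype.ofFinite ι
  intro x y hxy
  have hpiecewise (B : Finset ι) : f (B.piecewise y x) = f x := by
    induction B using Finset.induction_on with
    | empty => rw [Finset.piecewise_empty]
    | insert a B ha ih =>
      rw [Finset.piecewise_insert]
      by_cases haA : a ∈ A
      · rwa [← hxy a haA, ← Finset.piecewise_eq_of_notMem B y x ha, update_eq_self]
      · rw [hf a haA, ih]
  rw [← hpiecewise Finset.univ, Finset.piecewise_univ]

theorem eq_of_periodic_of_eventuallyEq {β : Type*} {f f' : ℕ → β} {k : ℕ} (hk : 0 < k)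
    (hf : Periodic f k) (hf' : Periodic f' k) (h : f =ᶠ[atTop] f') : f = f' := by
  obtain ⟨d, hd⟩ := eventually_atTop.1 h
  funext t
  rw [← hf.nsmul d t, ← hf'.nsmul d t]
  exact hd _ ((Nat.le_mul_of_pos_right d hk).trans (Nat.le_add_left _ t))

namespace AModule

variable {Λ S S' I I' : Type} (M : AModule Λ S I)

/-- The configuration reached by `M` from `x` after `t` steps under the infinite input stream `u`.
It agrees with `seqUpd` on the first `t` terms of `u`, but can be compared at different times. -/
def run (x : S → Λ) (u : ℕ → I → Λ) : ℕ → S → Λ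
  | 0 => x
  | t + 1 => M.upd (run x u t) (u t)

theorem seqUpd_eq_run (x : S → Λ) (u : ℕ → I → Λ) (m : ℕ) :
    M.seqUpd x (fun ℓ : Fin m => u ℓ) = M.run x u m := by
  induction m with
  | zero => simp only [seqUpd, List.ofFn_zero, List.foldl_nil, run]
  | succ m ih =>
    simp only [seqUpd] at ih
    simp only [seqUpd, List.ofFn_succ', List.concat_eq_append, List.foldl_append,
      List.foldl_cons, List.foldl_nil, run, Fin.val_last, Fin.val_castSucc, ih]

theorem run_add (x : S → Λ) (u : ℕ → I → Λ) (a b : ℕ) :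
    M.run x u (a + b) = M.run (M.run x u a) (fun t => u (a + t)) b := by
  induction b with
  | zero => rfl
  | succ b ih => rw [← Nat.add_assoc, run, run, ih]

theorem IsOutputFn.run_add_eq {M : AModule Λ S I} {s : S} {d : ℕ} {O : (Fin d → I → Λ) → Λ}
    (hO : M.IsOutputFn s O) (x : S → Λ) (u : ℕ → I → Λ) (a : ℕ) :
    M.run x u (a + d) s = O (fun ℓ => u (a + ℓ)) := by
  rw [run_add, ← seqUpd_eq_run, hO]

/-- A module is definite (in the sense of definite automata) if its state after a suitable number
`N` of steps is a function of the inputs alone. -/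
def IsDefinite : Prop :=
  ∃ N, ∀ u x y, M.run x u N = M.run y u N

theorem dependsOn_influences [Finite S] (s : S) (i : I → Λ) :
    DependsOn (M.f s · i) {r | M.Influences r s} := by
  classical
  refine dependsOn_of_update_eq fun a ha x b => ?_
  by_contra hne
  refine ha ⟨update x a b, x, i, fun r hr => update_of_ne hr _ _, fun hab => hne ?_, hne⟩
  rw [update_self] at hab
  rw [hab, update_eq_self]

variable {M} {M' : AModule Λ S' I} {ω : I → S} {ω' : I → S'}

theorem Acyclic.wellFounded_influences [Finite S] (hM : M.Acyclic) : WellFounded M.Influences :=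
  have : Std.Irrefl (Relation.TransGen M.Influences) := ⟨hM⟩
  (Finite.wellFounded_of_trans_of_irrefl (Relation.TransGen M.Influences)).mono
    fun _ _ => Relation.TransGen.single

theorem Acyclic.isDefinite [Finite S] (hM : M.Acyclic) : M.IsDefinite := by
  have hforget (s : S) : ∀ᶠ t in atTop, ∀ u x y, M.run x u t s = M.run y u t s := by
    induction s using hM.wellFounded_influences.induction with
    | h s ih =>
      have hpred : ∀ᶠ t in atTop, ∀ r, M.Influences r s →
          ∀ u x y, M.run x u t r = M.run y u t r :=
        eventually_all.2 fun r => eventually_imp_distrib_left.2 (ih r)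
      rw [← map_add_atTop_eq_nat 1, eventually_map]
      filter_upwards [hpred] with t ht u x y
      exact M.dependsOn_influences s (u t) fun r hr => ht r hr u x y
  obtain ⟨N, hN⟩ := (eventually_all.2 hforget).exists
  exact ⟨N, fun u x y => funext fun s => hN s u x y⟩

theorem IsDefinite.eventually_run_eq (hM : M.IsDefinite) :
    ∀ᶠ t in atTop, ∀ u x y, M.run x u t = M.run y u t := by
  obtain ⟨N, hN⟩ := hM
  filter_upwards [eventually_ge_atTop N] with t ht u x y
  obtain ⟨b, rfl⟩ := Nat.exists_eq_add_of_le ht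
  rw [run_add, run_add, hN u x y]

section PeriodicInputs

variable {u : ℕ → I → Λ} {k : ℕ}

theorem run_add_period (hu : Periodic u k) (x : S → Λ) (t : ℕ) :
    M.run x u (k + t) = M.run (M.run x u k) u t := by
  rw [run_add]
  congr 1
  funext j
  rw [Nat.add_comm, hu]

theorem periodic_run (hu : Periodic u k) {x : S → Λ} (hx : M.run x u k = x) :
    Periodic (M.run x u) k := fun t => by
  rw [Nat.add_comm, run_add_period hu, hx]

theorem iterate_run_period (hu : Periodic u k) (x : S → Λ) (n : ℕ) :
    (M.run · u k)^[n] x = M.run x u (n * k) := by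
  induction n generalizing x with
  | zero => rw [Nat.zero_mul]; rfl
  | succ n ih => rw [iterate_succ_apply, ih, Nat.succ_mul, Nat.add_comm, run_add_period hu]

theorem IsDefinite.existsUnique_run_period_eq [Nonempty (S → Λ)] (hM : M.IsDefinite) (hk : 0 < k)
    (hu : Periodic u k) : ∃! x, M.run x u k = x := by
  obtain ⟨N, hN⟩ := eventually_atTop.1 hM.eventually_run_eq
  refine existsUnique_isFixedPt_of_iterate_eq (G := (M.run · u k)) (n := N) fun x y => ?_
  rw [iterate_run_period hu, iterate_run_period hu]
  exact hN _ (Nat.le_mul_of_pos_right N hk) u x y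

end PeriodicInputs

variable (M ω) in
/-- The stream of inputs generated by `x` in the complete recursive wiring `↻_ω M`; its first
`k` terms form `genSeq M ω x k`. -/
def trace (x : S → Λ) (t : ℕ) (α : I) : Λ :=
  (M.wireF ω)^[t] x (ω α)

variable (M ω) in
theorem run_trace (x : S → Λ) (t : ℕ) : M.run x (M.trace ω x) t = (M.wireF ω)^[t] x := by
  induction t with
  | zero => rfl
  | succ t ih => rw [iterate_succ_apply', run, ih]; rfl

theorem trace_eq_of_run_eq {x : S → Λ} {u : ℕ → I → Λ}
    (hu : ∀ t α, M.run x u t (ω α) = u t α) : M.trace ω x = u := by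
  have hrun (t : ℕ) : (M.wireF ω)^[t] x = M.run x u t := by
    induction t with
    | zero => rfl
    | succ t ih =>
      rw [iterate_succ_apply', ih, run, wireF]
      congr 1
      exact funext (hu t)
  funext t α
  rw [trace, hrun, hu]

theorem trace_wireF (x : S → Λ) (t : ℕ) :
    M.trace ω (M.wireF ω x) t = M.trace ω x (t + 1) := rfl

theorem periodic_trace {x : S → Λ} {k : ℕ} (hx : IsPeriodicPt (M.wireF ω) k x) :
    Periodic (M.trace ω x) k := fun t => by
  funext α
  rw [trace, iterate_add_apply, hx.eq, trace]

theorem IsDefinite.injOn_trace (hM : M.IsDefinite) :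
    InjOn (M.trace ω) (periodicPts (M.wireF ω)) := by
  rintro x ⟨k, hk, hx⟩ y ⟨l, hl, hy⟩ hxy
  have hx' : IsPeriodicPt (M.wireF ω) (k * l) x := hx.mul_const l
  have hy' : IsPeriodicPt (M.wireF ω) (k * l) y := hy.const_mul k
  have : Nonempty (S → Λ) := ⟨x⟩
  refine (hM.existsUnique_run_period_eq (Nat.mul_pos hk hl) (periodic_trace hx')).unique ?_ ?_
  · rw [run_trace, hx'.eq]
  · rw [hxy, run_trace, hy'.eq]

theorem IsDefinite.image_trace_periodicPts_subset [Nonempty Λ] (hM' : M'.IsDefinite)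
    (hO : ∀ α, ∃ (d : ℕ) (O : (Fin d → I → Λ) → Λ),
      M.IsOutputFn (ω α) O ∧ M'.IsOutputFn (ω' α) O) :
    M.trace ω '' periodicPts (M.wireF ω) ⊆ M'.trace ω' '' periodicPts (M'.wireF ω') := by
  rintro _ ⟨x, ⟨k, hk, hx⟩, rfl⟩
  set u := M.trace ω x with hu
  have huk : Periodic u k := periodic_trace hx
  obtain ⟨x', hx', -⟩ := hM'.existsUnique_run_period_eq hk huk
  have hout (α : I) : (M'.run x' u · (ω' α)) = (u · α) := by
    obtain ⟨d, O, hd, hd'⟩ := hO α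
    refine eq_of_periodic_of_eventuallyEq hk ((periodic_run huk hx').comp (· (ω' α)))
      (huk.comp (· α)) ?_
    filter_upwards [eventually_ge_atTop d] with t ht
    obtain ⟨a, rfl⟩ := Nat.exists_eq_add_of_le' ht
    calc M'.run x' u (a + d) (ω' α) = O fun ℓ => u (a + ℓ) := hd'.run_add_eq x' u a
      _ = M.run x u (a + d) (ω α) := (hd.run_add_eq x u a).symm
      _ = u (a + d) α := by rw [hu, run_trace, trace]
  have htrace : M'.trace ω' x' = u := trace_eq_of_run_eq fun t α => congrFun (hout α) t
  refine ⟨x', ⟨k, hk, ?_⟩, htrace⟩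
  rw [IsPeriodicPt, IsFixedPt, ← run_trace, htrace, hx']

theorem IsDefinite.exists_bijOn_periodicPts [Nonempty Λ] (hM : M.IsDefinite) (hM' : M'.IsDefinite)
    (hO : ∀ α, ∃ (d : ℕ) (O : (Fin d → I → Λ) → Λ),
      M.IsOutputFn (ω α) O ∧ M'.IsOutputFn (ω' α) O) :
    ∃ φ : (S → Λ) → (S' → Λ),
      BijOn φ (periodicPts (M.wireF ω)) (periodicPts (M'.wireF ω')) ∧
      ∀ x ∈ periodicPts (M.wireF ω), φ (M.wireF ω x) = M'.wireF ω' (φ x) := by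
  have himage : M.trace ω '' periodicPts (M.wireF ω) = M'.trace ω' '' periodicPts (M'.wireF ω') :=
    (hM'.image_trace_periodicPts_subset hO).antisymm
      (hM.image_trace_periodicPts_subset fun α => (hO α).imp fun _ => Exists.imp fun _ => And.symm)
  have hτ : BijOn (M.trace ω) (periodicPts (M.wireF ω))
      (M'.trace ω' '' periodicPts (M'.wireF ω')) := himage ▸ hM.injOn_trace.bijOn_image
  have hτ' := (hM'.injOn_trace (ω := ω')).bijOn_image
  have hinv := hτ'.invOn_invFunOn
  let φ := invFunOn (M'.trace ω') (periodicPts (M'.wireF ω')) ∘ M.trace ω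
  have hφ : BijOn φ (periodicPts (M.wireF ω)) (periodicPts (M'.wireF ω')) :=
    (hτ'.symm hinv.symm).comp hτ
  have htrace {x : S → Λ} (hx : x ∈ periodicPts (M.wireF ω)) :
      M'.trace ω' (φ x) = M.trace ω x := hinv.2 (hτ.mapsTo hx)
  refine ⟨φ, hφ, fun x hx => ?_⟩
  have hFx := (bijOn_periodicPts (M.wireF ω)).mapsTo hx
  refine hM'.injOn_trace (hφ.mapsTo hFx) ((bijOn_periodicPts _).mapsTo (hφ.mapsTo hx)) ?_
  funext t
  rw [htrace hFx, trace_wireF, trace_wireF, htrace hx]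

/-- The module over the input set `I'` in which each input `α` of `M` reads the input `γ α`. Since
`γ` is arbitrary, an input of the new module may be read by several inputs of `M`, or by none. -/
def reindex (M : AModule Λ S I) (γ : I → I') : AModule Λ S I' where
  f s x i := M.f s x (i ∘ γ)

theorem run_reindex (γ : I → I') (x : S → Λ) (u : ℕ → I' → Λ) (t : ℕ) :
    (M.reindex γ).run x u t = M.run x (fun j => u j ∘ γ) t := by
  induction t with
  | zero => rfl
  | succ t ih => rw [run, run, ih]; rfl

theorem IsDefinite.reindex (hM : M.IsDefinite) (γ : I → I') : (M.reindex γ).IsDefinite := by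
  obtain ⟨N, hN⟩ := hM
  refine ⟨N, fun u x y => ?_⟩
  rw [run_reindex, run_reindex, hN]

theorem IsOutputFn.reindex {s : S} {d : ℕ} {O : (Fin d → I → Λ) → Λ} (hO : M.IsOutputFn s O)
    (γ : I → I') :
    (M.reindex γ).IsOutputFn s fun J : Fin d → I' → Λ => O fun ℓ => J ℓ ∘ γ := fun x J => by
  have hseqUpd : (M.reindex γ).seqUpd x J = M.seqUpd x (fun ℓ => J ℓ ∘ γ) := by
    rw [seqUpd, seqUpd, ← comp_def (· ∘ γ) J, ← List.map_ofFn, List.foldl_map]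
    rfl
  rw [hseqUpd, hO]

end AModule

section Attractors

variable {X Y : Type*} {F : X → X} {F' : Y → Y} {φ : X → Y} {x : X}

theorem iterate_mem_periodicPts (hx : x ∈ periodicPts F) (n : ℕ) : F^[n] x ∈ periodicPts F :=
  (bijOn_periodicPts F).mapsTo.iterate n hx

theorem map_iterate_of_mem_periodicPts (hφ : ∀ x ∈ periodicPts F, φ (F x) = F' (φ x))
    (hx : x ∈ periodicPts F) (n : ℕ) : φ (F^[n] x) = F'^[n] (φ x) := by
  induction n with
  | zero => rfl
  | succ n ih =>
    rw [iterate_succ_apply', iterate_succ_apply', hφ _ (iterate_mem_periodicPts hx n), ih]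

theorem minimalPeriod_map_of_mem_periodicPts (hinj : InjOn φ (periodicPts F))
    (hφ : ∀ x ∈ periodicPts F, φ (F x) = F' (φ x)) (hx : x ∈ periodicPts F) :
    minimalPeriod F' (φ x) = minimalPeriod F x := by
  refine minimalPeriod_eq_minimalPeriod_iff.2 fun n => ?_
  rw [IsPeriodicPt, IsFixedPt, ← map_iterate_of_mem_periodicPts hφ hx]
  exact hinj.eq_iff (iterate_mem_periodicPts hx n) hx

theorem image_orbit_of_mem_periodicPts (hφ : ∀ x ∈ periodicPts F, φ (F x) = F' (φ x))
    (hx : x ∈ periodicPts F) :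
    φ '' {y | ∃ j : ℕ, y = F^[j] x} = {y | ∃ j : ℕ, y = F'^[j] (φ x)} := by
  ext y
  constructor
  · rintro ⟨_, ⟨j, rfl⟩, rfl⟩
    exact ⟨j, map_iterate_of_mem_periodicPts hφ hx j⟩
  · rintro ⟨j, rfl⟩
    exact ⟨_, ⟨j, rfl⟩, map_iterate_of_mem_periodicPts hφ hx j⟩

theorem bijOn_image_isAttractor {Λ S S' : Type} {F : (S → Λ) → (S → Λ)}
    {F' : (S' → Λ) → (S' → Λ)} {φ : (S → Λ) → (S' → Λ)}
    (hbij : BijOn φ (periodicPts F) (periodicPts F'))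
    (hφ : ∀ x ∈ periodicPts F, φ (F x) = F' (φ x)) {c : ℕ} (hc : 0 < c) :
    BijOn (φ '' ·) {A | IsAttractor F c A} {A' | IsAttractor F' c A'} := by
  refine ⟨?_, hbij.injOn.image.mono ?_, ?_⟩
  · rintro _ ⟨x, rfl, rfl⟩
    have hx : x ∈ periodicPts F := minimalPeriod_pos_iff_mem_periodicPts.1 hc
    exact ⟨φ x, minimalPeriod_map_of_mem_periodicPts hbij.injOn hφ hx,
      image_orbit_of_mem_periodicPts hφ hx⟩
  · rintro _ ⟨x, rfl, rfl⟩ _ ⟨j, rfl⟩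
    exact iterate_mem_periodicPts (minimalPeriod_pos_iff_mem_periodicPts.1 hc) j
  · rintro _ ⟨x', rfl, rfl⟩
    obtain ⟨x, hx, rfl⟩ := hbij.surjOn (minimalPeriod_pos_iff_mem_periodicPts.1 hc)
    exact ⟨_, ⟨x, (minimalPeriod_map_of_mem_periodicPts hbij.injOn hφ hx).symm, rfl⟩,
      image_orbit_of_mem_periodicPts hφ hx⟩

end Attractors

theorem statement6_general {Λ S S' I I' : Type} [Nonempty Λ]
    {M : AModule Λ S I} {M' : AModule Λ S' I'} (hM : M.IsDefinite) (hM' : M'.IsDefinite)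
    (γ : I' → I) {ω : I → S} {ω' : I → S'}
    (hO : ∀ α, ∃ (d : ℕ) (O : (Fin d → I → Λ) → Λ) (O' : (Fin d → I' → Λ) → Λ),
      M.IsOutputFn (ω α) O ∧ M'.IsOutputFn (ω' α) O' ∧ ∀ J, O J = O' fun ℓ => J ℓ ∘ γ) :
    ∃ φ : (S → Λ) → (S' → Λ),
      BijOn φ (periodicPts (M.wireF ω)) (periodicPts (M'.wireF (ω' ∘ γ))) ∧
      (∀ x ∈ periodicPts (M.wireF ω), φ (M.wireF ω x) = M'.wireF (ω' ∘ γ) (φ x)) ∧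
      ∀ c, 0 < c → BijOn (φ '' ·) {A | IsAttractor (M.wireF ω) c A}
        {A' | IsAttractor (M'.wireF (ω' ∘ γ)) c A'} := by
  have hwire : M'.wireF (ω' ∘ γ) = (M'.reindex γ).wireF ω' := rfl
  rw [hwire]
  obtain ⟨φ, hbij, hφ⟩ := hM.exists_bijOn_periodicPts (ω := ω) (ω' := ω') (hM'.reindex γ)
    fun α => by
      obtain ⟨d, O, O', hd, hd', hOO'⟩ := hO α
      exact ⟨d, O, hd, funext hOO' ▸ hd'.reindex γ⟩
  exact ⟨φ, hbij, hφ, fun c hc => bijOn_image_isAttractor hbij hφ hc⟩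

/-- two acyclic modules whose output functions on `T`, `T'` agree
(up to bijections `g : I ≃ I'` and `h : T ≃ T'`) yield, for every complete
recursive wiring `ω : I → T`, networks `F = ↻_ω M` and
`F' = ↻_{h∘ω∘g⁻¹} M'` whose sets of periodic configurations are in an
`F`/`F'`-equivariant bijection; in particular they have the same number of
attractors of each size. -/
theorem statement6 {Λ S S' I I' : Type}
    [Fintype Λ] [Fintype S] [Fintype S'] [Fintype I] [Fintype I']
    (hΛ : 2 ≤ Fintype.card Λ)
    (M : AModule Λ S I) (M' : AModule Λ S' I')
    (hM : M.Acyclic) (hM' : M'.Acyclic)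
    (T : Set S) (T' : Set S') (g : I ≃ I') (h : T ≃ T')
    (hout : ∀ s : T, ∃ d : ℕ,
      IsLeast (M.delaySet s.1) d ∧ IsLeast (M'.delaySet (h s).1) d ∧
      ∀ (O : (Fin d → I → Λ) → Λ) (O' : (Fin d → I' → Λ) → Λ),
        M.IsOutputFn s.1 O → M'.IsOutputFn (h s).1 O' →
        ∀ J : Fin d → I → Λ, O J = O' (fun ℓ α' => J ℓ (g.symm α')))
    (ω : I → T)
    (F : (S → Λ) → (S → Λ)) (hF : F = M.wireF (fun α => (ω α).1))
    (F' : (S' → Λ) → (S' → Λ))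
    (hF' : F' = M'.wireF (fun α' => (h (ω (g.symm α'))).1)) :
    ∃ hh : (S → Λ) → (S' → Λ),
      Set.BijOn hh {x | ∃ k, 1 ≤ k ∧ F^[k] x = x}
        {x' | ∃ k, 1 ≤ k ∧ F'^[k] x' = x'} ∧
      (∀ x : S → Λ, (∃ k, 1 ≤ k ∧ F^[k] x = x) → hh (F x) = F' (hh x)) ∧
      ∀ c : ℕ, 1 ≤ c →
        Nat.card {X : Set (S → Λ) // IsAttractor F c X} =
        Nat.card {X' : Set (S' → Λ) // IsAttractor F' c X'} := by
  subst hF hF'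
  have : Nonempty Λ := Fintype.card_pos_iff.1 (by omega)
  obtain ⟨φ, hbij, hφ, hattr⟩ := statement6_general hM.isDefinite hM'.isDefinite g.symm
    (ω := fun α => (ω α).1) (ω' := fun α => (h (ω α)).1) fun α => by
      obtain ⟨d, ⟨⟨-, O, hO⟩, -⟩, ⟨⟨-, O', hO'⟩, -⟩, hOO'⟩ := hout (ω α)
      exact ⟨d, O, O', hO, hO', hOO' O O' hO hO'⟩
  exact ⟨φ, hbij, hφ, fun c hc => Nat.card_congr ((hattr c hc).equiv _)⟩
end

section
/- Let M be a one-to-one module over a finite alphabet Λ with node set S, single input α and designated output node e, and suppose the output function O = O_e of e has (minimal) delay d. Then |S| ≥ d. -/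
theorem nodup_of_isChain_of_transGen_irrefl {α : Type*} {r : α → α → Prop}
    (hr : ∀ a, ¬ Relation.TransGen r a a) {l : List α} (hl : l.IsChain r) : l.Nodup := by
  have hpairwise : l.Pairwise (Relation.TransGen r) :=
    (hl.imp fun _ _ => Relation.TransGen.single).pairwise
  refine hpairwise.imp ?_
  rintro a _ hab rfl
  exact hr a hab

namespace AModule

variable {Λ S I : Type} {M : AModule Λ S I} {s : S}

theorem f_update_of_not_influences [DecidableEq S] {r : S} (h : ¬ M.Influences r s)
    (x : S → Λ) (a : Λ) (i : I → Λ) : M.f s (Function.update x r a) i = M.f s x i := by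
  rcases eq_or_ne a (x r) with rfl | ha
  · rw [Function.update_eq_self]
  · by_contra hne
    exact h ⟨Function.update x r a, x, i, fun t ht => Function.update_of_ne ht a x,
      by rwa [Function.update_self], hne⟩

theorem f_congr_of_influences {x x' : S → Λ} (hfin : {r | x r ≠ x' r}.Finite)
    (h : ∀ r, M.Influences r s → x r = x' r) (i : I → Λ) : M.f s x i = M.f s x' i := by
  classical
  have replace_coords (T : Finset S) : M.f s (T.piecewise x' x) i = M.f s x i := by
    induction T using Finset.induction_on with
    | empty => rw [Finset.piecewise_empty]
    | insert r T hrT ih =>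
      rw [Finset.piecewise_insert]
      by_cases hr : M.Influences r s
      · have hself : T.piecewise x' x r = x' r := by
          rw [Finset.piecewise_eq_of_notMem T x' x hrT, h r hr]
        rwa [← hself, Function.update_eq_self]
      · rw [f_update_of_not_influences hr, ih]
  have hpiecewise : hfin.toFinset.piecewise x' x = x' := by
    funext r
    by_cases hr : x r = x' r <;> simp [Finset.piecewise, hr]
  rw [← replace_coords hfin.toFinset, hpiecewise]

theorem seqUpd_succ (M : AModule Λ S I) (x : S → Λ) {n : ℕ} (J : Fin (n + 1) → I → Λ) :
    M.seqUpd x J = M.upd (M.seqUpd x (Fin.init J)) (J (Fin.last n)) := by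
  simp only [seqUpd, List.ofFn_succ', List.concat_eq_append, List.foldl_append, List.foldl_cons,
    List.foldl_nil, Fin.init_def]

theorem exists_isChain_influences_of_seqUpd_ne [Finite S] {n : ℕ} {x x' : S → Λ}
    {J : Fin n → I → Λ} (hne : M.seqUpd x J s ≠ M.seqUpd x' J s) :
    ∃ l : List S, l.length = n ∧ (l ++ [s]).IsChain M.Influences := by
  induction n generalizing s with
  | zero => exact ⟨[], rfl, List.isChain_singleton s⟩
  | succ n ih =>
    simp only [seqUpd_succ, upd] at hne
    obtain ⟨r, hrs, hr⟩ : ∃ r, M.Influences r s ∧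
        M.seqUpd x (Fin.init J) r ≠ M.seqUpd x' (Fin.init J) r := by
      contrapose! hne
      exact f_congr_of_influences (Set.toFinite _) hne _
    obtain ⟨l, hl, hchain⟩ := ih hr
    refine ⟨l ++ [r], by simp [hl], ?_⟩
    rw [List.append_assoc, List.singleton_append, List.isChain_append_cons_cons]
    exact ⟨hchain, hrs, List.isChain_singleton s⟩

theorem Acyclic.seqUpd_eq_of_card_le [Fintype S] (hM : M.Acyclic) {n : ℕ}
    (hn : Fintype.card S ≤ n) (x x' : S → Λ) (J : Fin n → I → Λ) (s : S) :
    M.seqUpd x J s = M.seqUpd x' J s := by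
  by_contra hne
  obtain ⟨l, hl, hchain⟩ := exists_isChain_influences_of_seqUpd_ne hne
  have hcard : (l ++ [s]).length ≤ Fintype.card S :=
    (nodup_of_isChain_of_transGen_irrefl hM hchain).length_le_card
  rw [List.length_append, List.length_singleton, hl] at hcard
  omega

theorem mem_delaySet_iff [Nonempty Λ] {m : ℕ} :
    m ∈ M.delaySet s ↔ 1 ≤ m ∧ ∀ x x' J, M.seqUpd (m := m) x J s = M.seqUpd x' J s := by
  refine and_congr_right fun _ => ⟨?_, fun h => ?_⟩
  · rintro ⟨O, hO⟩ x x' J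
    rw [hO x J, hO x' J]
  · obtain ⟨a⟩ := ‹Nonempty Λ›
    exact ⟨fun J => M.seqUpd (fun _ => a) J s, fun x J => h x _ J⟩

end AModule

theorem statement11_general {Λ S I : Type} [Nonempty Λ] [Fintype S]
    {M : AModule Λ S I} (hM : M.Acyclic) (e : S) : Fintype.card S ∈ M.delaySet e :=
  AModule.mem_delaySet_iff.2
    ⟨Fintype.card_pos_iff.2 ⟨e⟩, fun x x' J => hM.seqUpd_eq_of_card_le le_rfl x x' J e⟩

/-- a one-to-one module (acyclic, single input) whose designated
output node has an output function of minimal delay `d` has at least `d`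
nodes. -/
theorem statement11 {Λ S : Type} [Fintype Λ] [Fintype S]
    (hΛ : 2 ≤ Fintype.card Λ)
    (M : AModule Λ S Unit) (hM : M.Acyclic) (e : S)
    (d : ℕ) (hd : IsLeast (M.delaySet e) d) :
    d ≤ Fintype.card S := by
  have : Nonempty Λ := Fintype.card_pos_iff.1 (by omega)
  exact hd.2 (statement11_general hM e)
end
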